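/- arXiv:math/0702651 — 2 statements merged into one kernel-verified Lean document; each statement's English description precedes it below -/
import Mathlib

section
/- There is a consequence-respecting and tautology-respecting translation from ω-variable classical propositional logic into 2-variable intuitionistic propositional logic: a function f : F_ω → F_2 such that for every nonempty Γ ⊆ F_ω and every φ ∈ F_ω, Γ ⊢_C φ iff f(Γ) ⊢ f(φ), and for every φ ∈ F_ω, ⊢_C φ iff ⊢ f(φ). -/
/-!
Fix a formula `β` and write `∼ψ` for `ψ → β`.  Intuitionistically the formulas `ψ` with
`∼∼ψ ⊢ ψ` form a Boolean algebra with bottom `β`, so sending the variable `x_n` to `∼∼α_n`, `⊥` to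
`β`, and `φ ∨ ψ` to the `∼∼`-closure of the disjunction (and commuting with `⊤, ∧, →`) turns
classical derivations into intuitionistic ones, whatever `β` and the `α_n` are
(`Prov.translate`).

For the converse, suppose `Γ ⊬_C φ`.  Classical completeness gives a valuation `v` satisfying `Γ`
and refuting `φ` (`exists_valuation`).  It is enough to find a Kripke model with a world `w` such
that `β` fails at `w` but holds at all worlds strictly above `w`, and `α_n` holds at `w` exactly
when `v n` is true: then `w` forces the translation of `ψ` iff `v` satisfies `ψ`
(`force_translate_iff`).

Two variables `p`, `q` suffice for this.  The variable `p` alone separates an infinite ascending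
chain of up-sets `{0, …, n-1}` of the Rieger–Nishimura ladder, defined by formulas `D_n`.  Let `q`
hold exactly on the ladder, and put below the ladder points `s_n`, where `s_n` sees exactly the
first `n` rungs.  The formula `α_n = (q → D_{n+1}) → q ∨ (q → D_n)` fails at `s_{n+1}` and at no
other `s_k`.  A root `w` which sees the whole ladder, `s_0`, and those `s_{n+1}` with `v n` false
therefore decides the `α_n` according to `v`.  Finally `β = q ∨ ¬q ∨ ¬¬q` holds on the ladder and
at each `s_n`, and fails at `w` because `w` sees both the ladder and `s_0`.
-/

/-- Propositional formulas over a set `V` of variables, built from `∧, ∨, →, ⊥, ⊤`.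
`¬φ` is the abbreviation `φ → ⊥`. -/
inductive PropForm (V : Type) : Type
  | var : V → PropForm V
  | bot : PropForm V
  | top : PropForm V
  | and : PropForm V → PropForm V → PropForm V
  | or : PropForm V → PropForm V → PropForm V
  | imp : PropForm V → PropForm V → PropForm V

/-- A natural-deduction style consequence relation.  When the parameter `cl` is `False`
this is exactly the consequence relation `⊢` of intuitionistic propositional logic;
when `cl` is `True` the rule of excluded middle becomes available and it is the
consequence relation `⊢_C` of classical propositional logic. -/
inductive Prov {V : Type} (cl : Prop) : Set (PropForm V) → PropForm V → Prop
  | ax : ∀ {Γ : Set (PropForm V)} {φ}, φ ∈ Γ → Prov cl Γ φ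
  | topI : ∀ {Γ}, Prov cl Γ .top
  | botE : ∀ {Γ φ}, Prov cl Γ .bot → Prov cl Γ φ
  | andI : ∀ {Γ φ ψ}, Prov cl Γ φ → Prov cl Γ ψ → Prov cl Γ (.and φ ψ)
  | andE1 : ∀ {Γ φ ψ}, Prov cl Γ (.and φ ψ) → Prov cl Γ φ
  | andE2 : ∀ {Γ φ ψ}, Prov cl Γ (.and φ ψ) → Prov cl Γ ψ
  | orI1 : ∀ {Γ φ ψ}, Prov cl Γ φ → Prov cl Γ (.or φ ψ)
  | orI2 : ∀ {Γ φ ψ}, Prov cl Γ ψ → Prov cl Γ (.or φ ψ)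
  | orE : ∀ {Γ φ ψ χ}, Prov cl Γ (.or φ ψ) → Prov cl (insert φ Γ) χ →
      Prov cl (insert ψ Γ) χ → Prov cl Γ χ
  | impI : ∀ {Γ φ ψ}, Prov cl (insert φ Γ) ψ → Prov cl Γ (.imp φ ψ)
  | impE : ∀ {Γ φ ψ}, Prov cl Γ (.imp φ ψ) → Prov cl Γ φ → Prov cl Γ ψ
  | em : ∀ {Γ φ}, cl → Prov cl Γ (.or φ (.imp φ .bot))

/-- Intuitionistic consequence `Γ ⊢ φ`. -/
abbrev IProv {V : Type} (Γ : Set (PropForm V)) (φ : PropForm V) : Prop := Prov False Γ φ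

/-- Classical consequence `Γ ⊢_C φ`. -/
abbrev CProv {V : Type} (Γ : Set (PropForm V)) (φ : PropForm V) : Prop := Prov True Γ φ

theorem Prov.mono {V : Type} {cl : Prop} {Γ : Set (PropForm V)} {φ : PropForm V}
    (h : Prov cl Γ φ) : ∀ {Δ : Set (PropForm V)}, Γ ⊆ Δ → Prov cl Δ φ := by
  induction h with
  | ax hmem => intro Δ hsub; exact Prov.ax (hsub hmem)
  | topI => intro Δ _; exact Prov.topI
  | botE _ ih => intro Δ hsub; exact Prov.botE (ih hsub)
  | andI _ _ ih1 ih2 => intro Δ hsub; exact Prov.andI (ih1 hsub) (ih2 hsub)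
  | andE1 _ ih => intro Δ hsub; exact Prov.andE1 (ih hsub)
  | andE2 _ ih => intro Δ hsub; exact Prov.andE2 (ih hsub)
  | orI1 _ ih => intro Δ hsub; exact Prov.orI1 (ih hsub)
  | orI2 _ ih => intro Δ hsub; exact Prov.orI2 (ih hsub)
  | orE _ _ _ ih1 ih2 ih3 =>
      intro Δ hsub
      exact Prov.orE (ih1 hsub) (ih2 (Set.insert_subset_insert hsub))
        (ih3 (Set.insert_subset_insert hsub))
  | impI _ ih => intro Δ hsub; exact Prov.impI (ih (Set.insert_subset_insert hsub))
  | impE _ _ ih1 ih2 => intro Δ hsub; exact Prov.impE (ih1 hsub) (ih2 hsub)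
  | em hcl => intro Δ _; exact Prov.em hcl

theorem Prov.cut {V : Type} {cl : Prop} {Γ : Set (PropForm V)} {φ ψ : PropForm V}
    (h1 : Prov cl Γ φ) (h2 : Prov cl (insert φ Γ) ψ) : Prov cl Γ ψ :=
  Prov.impE (Prov.impI h2) h1

/-- Single-premise consequence: `φ ⊢ ψ` (intuitionistic when `cl = False`). -/
def Entails {V : Type} (cl : Prop) (φ ψ : PropForm V) : Prop := Prov cl {φ} ψ

theorem Entails.refl {V : Type} {cl : Prop} (φ : PropForm V) : Entails cl φ φ := Prov.ax rfl

theorem Entails.trans' {V : Type} {cl : Prop} {φ ψ χ : PropForm V}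
    (h1 : Entails cl φ ψ) (h2 : Entails cl ψ χ) : Entails cl φ χ :=
  Prov.cut h1 (h2.mono (Set.singleton_subset_iff.mpr (Set.mem_insert _ _)))

theorem Entails.and_congr {V : Type} {cl : Prop} {a b c d : PropForm V}
    (h1 : Entails cl a b) (h2 : Entails cl c d) :
    Entails cl (PropForm.and a c) (PropForm.and b d) := by
  have ha : Prov cl ({PropForm.and a c} : Set (PropForm V)) a := Prov.andE1 (Prov.ax rfl)
  have hc : Prov cl ({PropForm.and a c} : Set (PropForm V)) c := Prov.andE2 (Prov.ax rfl)
  exact Prov.andI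
    (Prov.cut ha (h1.mono (Set.singleton_subset_iff.mpr (Set.mem_insert _ _))))
    (Prov.cut hc (h2.mono (Set.singleton_subset_iff.mpr (Set.mem_insert _ _))))

theorem Entails.or_congr {V : Type} {cl : Prop} {a b c d : PropForm V}
    (h1 : Entails cl a b) (h2 : Entails cl c d) :
    Entails cl (PropForm.or a c) (PropForm.or b d) :=
  Prov.orE (Prov.ax rfl)
    (Prov.orI1 (h1.mono (Set.singleton_subset_iff.mpr (Set.mem_insert _ _))))
    (Prov.orI2 (h2.mono (Set.singleton_subset_iff.mpr (Set.mem_insert _ _))))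

/-- Logical equivalence (intuitionistic when `cl = False`, classical when `cl = True`). -/
def provSetoid (cl : Prop) (V : Type) : Setoid (PropForm V) where
  r φ ψ := Entails cl φ ψ ∧ Entails cl ψ φ
  iseqv := ⟨fun φ => ⟨Entails.refl φ, Entails.refl φ⟩, fun h => ⟨h.2, h.1⟩,
    fun h1 h2 => ⟨h1.1.trans' h2.1, h2.2.trans' h1.2⟩⟩

/-- The Lindenbaum algebra of formulas over `V` modulo logical equivalence.
`Lindenbaum False (Fin n)` is the free Heyting algebra `H_n`,
`Lindenbaum False ℕ` is `H_ω`, and `Lindenbaum True ℕ` is the free Boolean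
algebra `B_ω`. -/
def Lindenbaum (cl : Prop) (V : Type) : Type := Quotient (provSetoid cl V)

/-- The equivalence class of a formula. -/
def Lindenbaum.mk (cl : Prop) {V : Type} (φ : PropForm V) : Lindenbaum cl V :=
  Quotient.mk (provSetoid cl V) φ

/-- The order of the Lindenbaum algebra: `[φ] ≤ [ψ]` iff `φ ⊢ ψ`. -/
def Lindenbaum.le {cl : Prop} {V : Type} : Lindenbaum cl V → Lindenbaum cl V → Prop :=
  Quotient.lift₂ (Entails cl) (by
    intro a b a' b' ha hb
    obtain ⟨ha1, ha2⟩ := ha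
    obtain ⟨hb1, hb2⟩ := hb
    exact propext ⟨fun h => (ha2.trans' h).trans' hb1, fun h => (ha1.trans' h).trans' hb2⟩)

/-- The meet `∧` of the Lindenbaum algebra. -/
def Lindenbaum.inf {cl : Prop} {V : Type} :
    Lindenbaum cl V → Lindenbaum cl V → Lindenbaum cl V :=
  Quotient.map₂ PropForm.and (by
    intro a a' ha b b' hb
    obtain ⟨ha1, ha2⟩ := ha
    obtain ⟨hb1, hb2⟩ := hb
    exact ⟨ha1.and_congr hb1, ha2.and_congr hb2⟩)

/-- The join `∨` of the Lindenbaum algebra. -/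
def Lindenbaum.sup {cl : Prop} {V : Type} :
    Lindenbaum cl V → Lindenbaum cl V → Lindenbaum cl V :=
  Quotient.map₂ PropForm.or (by
    intro a a' ha b b' hb
    obtain ⟨ha1, ha2⟩ := ha
    obtain ⟨hb1, hb2⟩ := hb
    exact ⟨ha1.or_congr hb1, ha2.or_congr hb2⟩)

/-! ### Classical completeness -/

/-- Classical truth of a formula under the valuation `v`. -/
def PropForm.Holds {V : Type} (v : V → Prop) : PropForm V → Prop
  | .var n => v n
  | .bot => False
  | .top => True
  | .and φ ψ => φ.Holds v ∧ ψ.Holds v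
  | .or φ ψ => φ.Holds v ∨ ψ.Holds v
  | .imp φ ψ => φ.Holds v → ψ.Holds v

theorem Prov.exists_finite {V : Type} {cl : Prop} {Γ : Set (PropForm V)} {φ : PropForm V}
    (h : Prov cl Γ φ) : ∃ Δ : Set (PropForm V), Δ.Finite ∧ Δ ⊆ Γ ∧ Prov cl Δ φ := by
  -- Discharging a premise: a finite part of `insert ψ Γ` is covered by `insert ψ` of one of `Γ`.
  have key : ∀ {Γ : Set (PropForm V)} {ψ χ : PropForm V},
      (∃ Δ : Set (PropForm V), Δ.Finite ∧ Δ ⊆ insert ψ Γ ∧ Prov cl Δ χ) →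
      ∃ Δ : Set (PropForm V), Δ.Finite ∧ Δ ⊆ Γ ∧ Prov cl (insert ψ Δ) χ := by
    rintro Γ ψ χ ⟨Δ, hf, hs, hp⟩
    refine ⟨Δ \ {ψ}, hf.subset Set.sdiff_subset, ?_, hp.mono ?_⟩
    · rintro x ⟨hx, hne⟩
      exact (hs hx).resolve_left hne
    · intro x hx
      by_cases hxψ : x = ψ
      · exact Or.inl hxψ
      · exact Or.inr ⟨hx, hxψ⟩
  induction h with
  | @ax Γ φ hmem =>
      exact ⟨{φ}, Set.finite_singleton _, Set.singleton_subset_iff.mpr hmem, Prov.ax rfl⟩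
  | topI => exact ⟨∅, Set.finite_empty, Set.empty_subset _, Prov.topI⟩
  | botE _ ih => obtain ⟨Δ, hf, hs, hp⟩ := ih; exact ⟨Δ, hf, hs, hp.botE⟩
  | andI _ _ ih1 ih2 =>
      obtain ⟨Δ, hf, hs, hp⟩ := ih1
      obtain ⟨Δ', hf', hs', hp'⟩ := ih2
      exact ⟨Δ ∪ Δ', hf.union hf', Set.union_subset hs hs',
        (hp.mono Set.subset_union_left).andI (hp'.mono Set.subset_union_right)⟩
  | andE1 _ ih => obtain ⟨Δ, hf, hs, hp⟩ := ih; exact ⟨Δ, hf, hs, hp.andE1⟩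
  | andE2 _ ih => obtain ⟨Δ, hf, hs, hp⟩ := ih; exact ⟨Δ, hf, hs, hp.andE2⟩
  | orI1 _ ih => obtain ⟨Δ, hf, hs, hp⟩ := ih; exact ⟨Δ, hf, hs, hp.orI1⟩
  | orI2 _ ih => obtain ⟨Δ, hf, hs, hp⟩ := ih; exact ⟨Δ, hf, hs, hp.orI2⟩
  | orE _ _ _ ih1 ih2 ih3 =>
      obtain ⟨Δ, hf, hs, hp⟩ := ih1
      obtain ⟨Δ', hf', hs', hp'⟩ := key ih2
      obtain ⟨Δ'', hf'', hs'', hp''⟩ := key ih3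
      refine ⟨Δ ∪ (Δ' ∪ Δ''), hf.union (hf'.union hf''),
        Set.union_subset hs (Set.union_subset hs' hs''),
        (hp.mono Set.subset_union_left).orE (hp'.mono ?_) (hp''.mono ?_)⟩
      · exact Set.insert_subset_insert fun x hx => Or.inr (Or.inl hx)
      · exact Set.insert_subset_insert fun x hx => Or.inr (Or.inr hx)
  | impI _ ih => obtain ⟨Δ, hf, hs, hp⟩ := key ih; exact ⟨Δ, hf, hs, hp.impI⟩
  | impE _ _ ih1 ih2 =>
      obtain ⟨Δ, hf, hs, hp⟩ := ih1
      obtain ⟨Δ', hf', hs', hp'⟩ := ih2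
      exact ⟨Δ ∪ Δ', hf.union hf', Set.union_subset hs hs',
        (hp.mono Set.subset_union_left).impE (hp'.mono Set.subset_union_right)⟩
  | em hcl => exact ⟨∅, Set.finite_empty, Set.empty_subset _, Prov.em hcl⟩

theorem exists_maximal_not_prov {V : Type} {cl : Prop} {Γ : Set (PropForm V)} {φ : PropForm V}
    (h : ¬ Prov cl Γ φ) :
    ∃ Δ : Set (PropForm V), Γ ⊆ Δ ∧ ¬ Prov cl Δ φ ∧ ∀ ψ, ψ ∉ Δ → Prov cl (insert ψ Δ) φ := by
  obtain ⟨Δ, hΓ, hmax⟩ := zorn_subset_nonempty {Δ : Set (PropForm V) | ¬ Prov cl Δ φ} (by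
    intro c hc hchain hne
    refine ⟨⋃₀ c, ?_, fun s hs => Set.subset_sUnion_of_mem hs⟩
    intro hp
    obtain ⟨Δ, hf, hs, hp⟩ := Prov.exists_finite hp
    obtain ⟨t, htc, hst⟩ :=
      hchain.directedOn.exists_mem_subset_of_finite_of_subset_sUnion hne hf hs
    exact hc htc (hp.mono hst)) Γ h
  refine ⟨Δ, hΓ, hmax.prop, fun ψ hψ => ?_⟩
  by_contra hn
  exact hψ (hmax.le_of_ge hn (Set.subset_insert _ _) (Set.mem_insert _ _))

/-- Strong completeness of classical propositional logic. -/
theorem exists_valuation {V : Type} {Γ : Set (PropForm V)} {φ : PropForm V} (h : ¬ CProv Γ φ) :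
    ∃ v : V → Prop, (∀ ψ ∈ Γ, ψ.Holds v) ∧ ¬ φ.Holds v := by
  obtain ⟨Δ, hΓ, hφ, hmax⟩ := exists_maximal_not_prov h
  have hcl : ∀ {ψ}, CProv Δ ψ → ψ ∈ Δ := by
    intro ψ hψ
    by_contra hn
    exact hφ (Prov.cut hψ (hmax ψ hn))
  have truth : ∀ ψ : PropForm V, ψ ∈ Δ ↔ ψ.Holds (fun n => PropForm.var n ∈ Δ) := by
    intro ψ
    induction ψ with
    | var n => exact Iff.rfl
    | bot => exact ⟨fun hb => hφ (Prov.botE (Prov.ax hb)), False.elim⟩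
    | top => exact ⟨fun _ => trivial, fun _ => hcl Prov.topI⟩
    | and a b iha ihb =>
        simp only [PropForm.Holds, ← iha, ← ihb]
        exact ⟨fun hab => ⟨hcl (Prov.ax hab).andE1, hcl (Prov.ax hab).andE2⟩,
          fun hab => hcl ((Prov.ax hab.1).andI (Prov.ax hab.2))⟩
    | or a b iha ihb =>
        simp only [PropForm.Holds, ← iha, ← ihb]
        constructor
        · intro hab
          by_contra hn
          rw [not_or] at hn
          exact hφ ((Prov.ax hab).orE (hmax a hn.1) (hmax b hn.2))
        · rintro (ha | hb)
          · exact hcl (Prov.ax ha).orI1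
          · exact hcl (Prov.ax hb).orI2
    | imp a b iha ihb =>
        simp only [PropForm.Holds, ← iha, ← ihb]
        constructor
        · intro hab ha
          exact hcl ((Prov.ax hab).impE (Prov.ax ha))
        · intro hab
          by_cases ha : a ∈ Δ
          · exact hcl ((Prov.ax (Set.mem_insert_of_mem _ (hab ha))).impI)
          · -- Split on `a ∨ ¬a`: `a` gives `φ`, and `¬a` gives `a → b`, which gives `φ`.
            by_contra hn
            refine hφ ((Prov.em trivial : CProv Δ (.or a (.imp a .bot))).orE (hmax a ha) ?_)
            refine Prov.cut (φ := .imp a b) ?_ ((hmax _ hn).mono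
              (Set.insert_subset_insert (Set.subset_insert _ _)))
            refine Prov.impI (Prov.botE (Prov.impE (φ := a) (Prov.ax ?_) (Prov.ax ?_)))
            · exact Or.inr (Or.inl rfl)
            · exact Or.inl rfl
  exact ⟨_, fun ψ hψ => (truth ψ).1 (hΓ hψ), fun hn => hφ (Prov.ax ((truth φ).2 hn))⟩

/-! ### The translation relative to a formula `β` -/

/-- The closure `(ψ → β) → β` of `ψ`, a double negation with `β` in the role of falsity. -/
def PropForm.dneg {V : Type} (ψ β : PropForm V) : PropForm V := .imp (.imp ψ β) β

/-- The negative translation with `β` in the role of falsity and with the variable `n` replaced by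
the closure of `α n`. -/
def negTrans {V W : Type} (β : PropForm W) (α : V → PropForm W) :
    PropForm V → PropForm W
  | .var n => (α n).dneg β
  | .bot => β
  | .top => .top
  | .and φ ψ => .and (negTrans β α φ) (negTrans β α ψ)
  | .or φ ψ => (PropForm.or (negTrans β α φ) (negTrans β α ψ)).dneg β
  | .imp φ ψ => .imp (negTrans β α φ) (negTrans β α ψ)

section Translation

variable {V W : Type} {β : PropForm W} {α : V → PropForm W}

theorem Prov.weaken {cl : Prop} {Γ : Set (PropForm V)} {φ ψ : PropForm V} (h : Prov cl Γ φ) :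
    Prov cl (insert ψ Γ) φ := h.mono (Set.subset_insert _ _)

theorem Prov.hyp {cl : Prop} {Γ : Set (PropForm V)} {φ : PropForm V} :
    Prov cl (insert φ Γ) φ := Prov.ax (Set.mem_insert _ _)

theorem Prov.dneg_intro {Γ : Set (PropForm W)} {ψ : PropForm W} (h : IProv Γ ψ) :
    IProv Γ (ψ.dneg β) :=
  Prov.impI (Prov.impE Prov.hyp h.weaken)

/-- The closure is functorial: from `ψ ⊢ χ` derive `∼∼ψ ⊢ ∼∼χ`. -/
theorem Prov.dneg_map {Γ : Set (PropForm W)} {ψ χ : PropForm W} (h : IProv Γ (ψ.dneg β))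
    (h' : IProv (insert ψ Γ) χ) : IProv Γ (χ.dneg β) := by
  refine Prov.impI (Prov.impE h.weaken (Prov.impI (Prov.impE Prov.hyp.weaken ?_)))
  exact h'.mono (Set.insert_subset_insert (Set.subset_insert _ _))

theorem Prov.dneg_idem {Γ : Set (PropForm W)} {ψ : PropForm W}
    (h : IProv Γ ((ψ.dneg β).dneg β)) : IProv Γ (ψ.dneg β) :=
  Prov.impI (Prov.impE h.weaken (Prov.impI (Prov.impE Prov.hyp Prov.hyp.weaken)))

/-- Translated formulas are stable under the closure. -/
theorem Prov.dneg_elim (φ : PropForm V) {Γ : Set (PropForm W)}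
    (h : IProv Γ ((negTrans β α φ).dneg β)) : IProv Γ (negTrans β α φ) := by
  induction φ generalizing Γ with
  | var n => exact h.dneg_idem
  | bot => exact Prov.impE h (Prov.impI Prov.hyp)
  | top => exact Prov.topI
  | and a b iha ihb =>
      exact Prov.andI (iha (h.dneg_map Prov.hyp.andE1)) (ihb (h.dneg_map Prov.hyp.andE2))
  | or a b _ _ => exact h.dneg_idem
  | imp a b _ ihb =>
      exact Prov.impI (ihb (h.weaken.dneg_map (Prov.hyp.impE Prov.hyp.weaken)))

theorem Prov.translate_of_falsum (φ : PropForm V) {Γ : Set (PropForm W)} (h : IProv Γ β) :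
    IProv Γ (negTrans β α φ) :=
  Prov.dneg_elim φ (Prov.impI h.weaken)

theorem Prov.translate {Γ : Set (PropForm V)} {φ : PropForm V} (h : CProv Γ φ) :
    IProv (negTrans β α '' Γ) (negTrans β α φ) := by
  induction h with
  | ax hmem => exact Prov.ax (Set.mem_image_of_mem _ hmem)
  | topI => exact Prov.topI
  | botE _ ih => exact Prov.translate_of_falsum _ ih
  | andI _ _ ih1 ih2 => exact Prov.andI ih1 ih2
  | andE1 _ ih => exact Prov.andE1 ih
  | andE2 _ ih => exact Prov.andE2 ih
  | orI1 _ ih => exact Prov.dneg_intro (Prov.orI1 ih)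
  | orI2 _ ih => exact Prov.dneg_intro (Prov.orI2 ih)
  | orE _ _ _ ih1 ih2 ih3 =>
      rw [Set.image_insert_eq] at ih2 ih3
      refine Prov.dneg_elim _ (Prov.dneg_map ih1 (Prov.orE Prov.hyp ?_ ?_))
      · exact ih2.mono (Set.insert_subset_insert (Set.subset_insert _ _))
      · exact ih3.mono (Set.insert_subset_insert (Set.subset_insert _ _))
  | impI _ ih =>
      rw [Set.image_insert_eq] at ih
      exact Prov.impI ih
  | impE _ _ ih1 ih2 => exact Prov.impE ih1 ih2
  | em _ =>
      -- Under the assumption `∼(a ∨ ∼a)`, both `∼a` and `a ∨ ∼a` are derivable.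
      refine Prov.impI (Prov.impE Prov.hyp (Prov.orI2 (Prov.impI ?_)))
      exact Prov.impE Prov.hyp.weaken (Prov.orI1 Prov.hyp)

end Translation

/-! ### Kripke semantics -/

/-- Kripke forcing over an accessibility relation `R`, where `R x y` says that `y` lies above `x`. -/
def PropForm.Force {V M : Type} (R : M → M → Prop) (val : V → M → Prop) : PropForm V → M → Prop
  | .var n, x => val n x
  | .bot, _ => False
  | .top, _ => True
  | .and φ ψ, x => φ.Force R val x ∧ ψ.Force R val x
  | .or φ ψ, x => φ.Force R val x ∨ ψ.Force R val x
  | .imp φ ψ, x => ∀ y, R x y → φ.Force R val y → ψ.Force R val y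

section Kripke

variable {V W M : Type} {R : M → M → Prop} {val : W → M → Prop}

theorem PropForm.Force.mono (htrans : ∀ x y z, R x y → R y z → R x z)
    (hval : ∀ n x y, R x y → val n x → val n y) (φ : PropForm W) {x y : M} (hxy : R x y)
    (h : φ.Force R val x) : φ.Force R val y := by
  induction φ with
  | var n => exact hval n x y hxy h
  | bot => exact h
  | top => trivial
  | and a b iha ihb => exact ⟨iha h.1, ihb h.2⟩
  | or a b iha ihb => exact h.imp iha ihb
  | imp a b _ _ => exact fun z hz => h z (htrans _ _ _ hxy hz)

theorem Prov.force (hrefl : ∀ x, R x x) (htrans : ∀ x y z, R x y → R y z → R x z)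
    (hval : ∀ n x y, R x y → val n x → val n y) {Γ : Set (PropForm W)} {φ : PropForm W}
    (h : IProv Γ φ) {x : M} (hx : ∀ ψ ∈ Γ, ψ.Force R val x) : φ.Force R val x := by
  induction h generalizing x with
  | ax hmem => exact hx _ hmem
  | topI => trivial
  | botE _ ih => exact (ih hx).elim
  | andI _ _ ih1 ih2 => exact ⟨ih1 hx, ih2 hx⟩
  | andE1 _ ih => exact (ih hx).1
  | andE2 _ ih => exact (ih hx).2
  | orI1 _ ih => exact Or.inl (ih hx)
  | orI2 _ ih => exact Or.inr (ih hx)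
  | orE _ _ _ ih1 ih2 ih3 =>
      rcases ih1 hx with h | h
      · exact ih2 (Set.forall_mem_insert.mpr ⟨h, hx⟩)
      · exact ih3 (Set.forall_mem_insert.mpr ⟨h, hx⟩)
  | impI _ ih =>
      intro y hxy hy
      exact ih (Set.forall_mem_insert.mpr
        ⟨hy, fun ψ hψ => PropForm.Force.mono htrans hval ψ hxy (hx ψ hψ)⟩)
  | impE _ _ ih1 ih2 => exact ih1 hx _ (hrefl x) (ih2 hx)
  | em hcl => exact hcl.elim

/-- At a world `w` that is maximal among those not forcing `β`, the translation of a formula is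
forced iff the formula is true under the valuation `n ↦ (w ⊩ α n)`. -/
theorem force_translate_iff (hrefl : ∀ x, R x x) (htrans : ∀ x y z, R x y → R y z → R x z)
    (hval : ∀ n x y, R x y → val n x → val n y) {β : PropForm W} {α : V → PropForm W} {w : M}
    (hβ : ¬ β.Force R val w) (hmax : ∀ x, R w x → x ≠ w → β.Force R val x) (φ : PropForm V) :
    (negTrans β α φ).Force R val w ↔ φ.Holds (fun n => (α n).Force R val w) := by
  have hneg : ∀ ψ : PropForm W, (PropForm.imp ψ β).Force R val w ↔ ¬ ψ.Force R val w := by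
    intro ψ
    refine ⟨fun h hψ => hβ (h w (hrefl w) hψ), fun h x hx hψ => ?_⟩
    by_cases hxw : x = w
    · subst hxw
      exact (h hψ).elim
    · exact hmax x hx hxw
  have hdneg : ∀ ψ : PropForm W, (ψ.dneg β).Force R val w ↔ ψ.Force R val w := by
    intro ψ
    rw [PropForm.dneg, hneg, hneg, not_not]
  induction φ with
  | var n => exact hdneg _
  | bot => exact iff_of_false hβ id
  | top => exact Iff.rfl
  | and a b iha ihb => exact and_congr iha ihb
  | or a b iha ihb => exact (hdneg _).trans (or_congr iha ihb)
  | imp a b iha ihb =>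
      simp only [PropForm.Holds, ← iha, ← ihb]
      refine ⟨fun h => h w (hrefl w), fun h x hx ha => ?_⟩
      by_cases hxw : x = w
      · subst hxw
        exact h ha
      · exact Prov.force (Γ := {β}) hrefl htrans hval
          (Prov.translate_of_falsum b (Prov.ax rfl)) (by simpa using hmax x hx hxw)

end Kripke

/-! ### The formulas in two variables -/

/-- The formulas `(G_n, E_n, D_n)` in the variable `p = x_0` defining, on the Rieger–Nishimura
ladder, the up-set generated by the rung `n`, its part `{k | k + 2 ≤ n}` strictly above `n`, and
`{k | k < n}`, respectively. -/
def ladder : ℕ → PropForm (Fin 2) × PropForm (Fin 2) × PropForm (Fin 2)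
  | 0 => (.var 0, .bot, .bot)
  | n + 1 => (.imp (ladder n).1 (ladder n).2.1, (ladder n).2.2, .or (ladder n).2.2 (ladder n).1)

/-- The formula `D_n`, defining the first `n` rungs of the ladder. -/
def rungs (n : ℕ) : PropForm (Fin 2) := (ladder n).2.2

/-- `α_n = (q → D_{n+1}) → q ∨ (q → D_n)`, where `q = x_1`. -/
def alpha (n : ℕ) : PropForm (Fin 2) :=
  .imp (.imp (.var 1) (rungs (n + 1))) (.or (.var 1) (.imp (.var 1) (rungs n)))

/-- `β = q ∨ (¬q ∨ ¬¬q)`, where `q = x_1`. -/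
def beta : PropForm (Fin 2) :=
  .or (.var 1) (.or (.imp (.var 1) .bot) (.imp (.imp (.var 1) .bot) .bot))

/-! ### The Kripke model -/

/-- Worlds of the model: the rungs of the Rieger–Nishimura ladder, the side points `s_n`, and a
root. -/
inductive World : Type
  | rung : ℕ → World
  | side : ℕ → World
  | root : World

/-- Accessibility.  The ladder is ordered by `k` above `n` iff `k = n` or `k + 2 ≤ n`; the side
point `n` sees the rungs `k < n`; the root sees all rungs, the side point `0`, and the side points
`n + 1` with `n ∈ S`. -/
def World.Sees (S : Set ℕ) : World → World → Prop
  | rung n, rung k => k = n ∨ k + 2 ≤ n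
  | rung _, _ => False
  | side n, rung k => k < n
  | side n, side k => k = n
  | side _, root => False
  | root, rung _ => True
  | root, side 0 => True
  | root, side (n + 1) => n ∈ S
  | root, root => True

/-- The variable `x_0` holds only at the rung `0`; the variable `x_1` holds exactly on the ladder. -/
def World.val : Fin 2 → World → Prop
  | 0, rung k => k = 0
  | 1, rung _ => True
  | _, _ => False

namespace World

variable {S : Set ℕ}

theorem sees_refl (x : World) : Sees S x x := by
  cases x <;> simp [Sees]

theorem sees_trans (x y z : World) (hxy : Sees S x y) (hyz : Sees S y z) : Sees S x z := by
  rcases x with n | n | _ <;> rcases y with k | (_ | k) | _ <;> rcases z with m | (_ | m) | _ <;>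
    simp only [Sees] at * <;> first | omega | simp_all

theorem val_mono (i : Fin 2) (x y : World) (hxy : Sees S x y) (h : val i x) : val i y := by
  fin_cases i <;> rcases x with n | n | _ <;> rcases y with k | k | _ <;>
    simp_all [Sees, val]

theorem force_ladder (n k : ℕ) :
    ((ladder n).1.Force (Sees S) val (rung k) ↔ k = n ∨ k + 2 ≤ n) ∧
    ((ladder n).2.1.Force (Sees S) val (rung k) ↔ k + 2 ≤ n) ∧
    ((ladder n).2.2.Force (Sees S) val (rung k) ↔ k < n) := by
  induction n generalizing k with
  | zero => simp [ladder, PropForm.Force, val]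
  | succ n ih =>
      refine ⟨?_, ?_, ?_⟩
      · -- `k` forces `G_n → E_n` iff it does not see `n`, the only rung in `G_n` but not `E_n`.
        constructor
        · intro h
          by_contra hk
          have := (ih n).2.1.1 (h (rung n) (show n = k ∨ n + 2 ≤ k by omega)
            ((ih n).1.2 (Or.inl rfl)))
          omega
        · rintro hk (m | m | _) hm hG
          · rw [(ih m).1] at hG
            rw [(ih m).2.1]
            simp only [Sees] at hm
            omega
          · exact hm.elim
          · exact hm.elim
      · exact (ih k).2.2.trans (by omega)
      · exact (or_congr (ih k).2.2 (ih k).1).trans (by omega)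

/-- A world forces `q → D_n` iff every rung above it has index less than `n`. -/
theorem force_imp_rungs (n : ℕ) (x : World) :
    (PropForm.imp (.var 1) (rungs n)).Force (Sees S) val x ↔ ∀ k, Sees S x (rung k) → k < n := by
  constructor
  · intro h k hk
    exact (force_ladder n k).2.2.1 (h (rung k) hk trivial)
  · rintro h (k | k | _) hk hq
    · exact (force_ladder n k).2.2.2 (h k hk)
    · exact hq.elim
    · exact hq.elim

theorem force_alpha_root (n : ℕ) : (alpha n).Force (Sees S) val root ↔ n ∉ S := by
  constructor
  · intro h hn
    rcases h (side (n + 1)) hn ((force_imp_rungs _ _).2 fun k hk => hk) with hq | hD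
    · exact hq
    · exact lt_irrefl n ((force_imp_rungs _ _).1 hD n (Nat.lt_succ_self n))
  · rintro hn (k | k | _) hk hD
    · exact Or.inl trivial
    · refine Or.inr ((force_imp_rungs _ _).2 fun m hm => ?_)
      rw [force_imp_rungs] at hD
      -- The side point `k` has `k ≤ n + 1` by `hD`, and `k ≠ n + 1` because `n ∉ S`.
      have hkn : k ≠ n + 1 := by
        rintro rfl
        exact hn hk
      have hm' : m < k := hm
      have := hD (k - 1) (show k - 1 < k by omega)
      omega
    · exact absurd ((force_imp_rungs _ _).1 hD (n + 1) trivial) (lt_irrefl _)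

theorem not_force_beta_root : ¬ beta.Force (Sees S) val root := by
  rintro (h | h | h)
  · exact h
  · exact h (rung 0) trivial trivial
  · refine h (side 0) trivial ?_
    rintro (k | k | _) hk hq
    · exact absurd hk (Nat.not_lt_zero k)
    · exact hq
    · exact hq

theorem force_beta (x : World) (hx : x ≠ root) : beta.Force (Sees S) val x := by
  rcases x with n | n | _
  · exact Or.inl trivial
  · rcases n with _ | n
    · refine Or.inr (Or.inl ?_)
      rintro (k | k | _) hk hq
      · exact absurd hk (Nat.not_lt_zero k)
      · exact hq
      · exact hq
    · refine Or.inr (Or.inr ?_)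
      rintro (k | k | _) hk hq
      · exact hq (rung k) (sees_refl _) trivial
      · have hk' : k = n + 1 := hk
        exact hq (rung 0) (show 0 < k by omega) trivial
      · exact hk.elim
  · exact (hx rfl).elim

end World

theorem cprov_iff_iprov_translate (Γ : Set (PropForm ℕ)) (φ : PropForm ℕ) :
    CProv Γ φ ↔ IProv (negTrans beta alpha '' Γ) (negTrans beta alpha φ) := by
  refine ⟨Prov.translate, fun h => ?_⟩
  by_contra hn
  obtain ⟨v, hΓ, hφ⟩ := exists_valuation hn
  -- In the model with `S = {n | ¬ v n}` the root decides the formulas `alpha n` according to `v`.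
  have key : ∀ ψ : PropForm ℕ,
      (negTrans beta alpha ψ).Force (World.Sees {n | ¬ v n}) World.val World.root ↔
        ψ.Holds v := by
    intro ψ
    rw [force_translate_iff World.sees_refl World.sees_trans World.val_mono
      World.not_force_beta_root (fun x _ hx => World.force_beta x hx)]
    simp only [World.force_alpha_root, Set.mem_ofPred_eq, not_not]
  refine hφ ((key φ).1 (Prov.force World.sees_refl World.sees_trans World.val_mono h ?_))
  rintro _ ⟨ψ, hψ, rfl⟩
  exact (key ψ).2 (hΓ ψ hψ)

/-- There is a consequence- and tautology-respecting translation from `ω`-variable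
classical propositional logic into `2`-variable intuitionistic propositional logic. -/
theorem classical_to_two_variable_intuitionistic :
    ∃ f : PropForm ℕ → PropForm (Fin 2),
      (∀ Γ : Set (PropForm ℕ), Γ.Nonempty →
        ∀ φ : PropForm ℕ, (CProv Γ φ ↔ IProv (f '' Γ) (f φ))) ∧
      (∀ φ : PropForm ℕ, (CProv (∅ : Set (PropForm ℕ)) φ ↔
        IProv (∅ : Set (PropForm (Fin 2))) (f φ))) := by
  refine ⟨negTrans beta alpha, fun Γ _ φ => cprov_iff_iprov_translate Γ φ, fun φ => ?_⟩
  simpa only [Set.image_empty] using cprov_iff_iprov_translate ∅ φ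
end

section
/- For every n ≥ 2 and every m ≥ 0, the levels of Bellissima's Kripke model K_n satisfy |Lev^n_{m+1}| > |Lev^n_m|; in particular, K_n has finite levels of arbitrarily large cardinality. -/
/-!
Nodes of the same level are pairwise incomparable, because every strict successor of a node of
level `i + 1` lies above an element of its antichain and so has level at most `i`
(`eq_of_le_of_level_eq`). Hence each two-element subset `T` of `Lev m` is an antichain and
`⟨T, ∅⟩` is a node of level `m + 1`; distinct `T` give distinct nodes, so
`(|Lev m|).choose 2 ≤ |Lev (m + 1)|` (`choose_two_le_ncard_Lev_succ`). Level `0` has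
`2 ^ n ≥ 4` nodes, and `L < L.choose 2` for `L ≥ 4`, so by induction every level has at least
four nodes and is strictly smaller than the next one.
-/

/-- Validity of a pair `⟨T, U⟩` as a node of level `i + 1` in Bellissima's construction:
`T` is an antichain of nodes of level `≤ i` containing at least one node of level `i`,
`U` is a set of variables forced at every node of `T`, and `U` is a proper subset of the
variables forced at `β` whenever `T = {β}`. -/
def BellissimaValid {Node : Type} {n : ℕ} (le : Node → Node → Prop) (level : Node → ℕ)
    (val : Node → Finset (Fin n)) (i : ℕ) (T : Finset Node) (U : Finset (Fin n)) : Prop :=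
  (∀ a ∈ T, level a ≤ i) ∧ (∃ a ∈ T, level a = i) ∧
  (∀ a ∈ T, ∀ b ∈ T, le a b → a = b) ∧
  (∀ a ∈ T, U ⊆ val a) ∧
  (∀ β, T = {β} → U ⊂ val β)

/-- Bellissima's Kripke model `K_n` for `n` propositional variables, presented through its
characteristic properties: a partial order of nodes, each of a finite level, each forcing a
set `val` of variables (monotonicity of forcing is `val_mono`); the nodes of level `0` are
exactly the (pairwise incomparable) subsets `U ⊆ {x_1, …, x_n}`, forcing exactly the
variables of `U`; the nodes of level `i + 1` are exactly the pairs `⟨T, U⟩` that are valid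
in the sense of `BellissimaValid`, forcing exactly the variables of `U` and whose strict
successors are exactly the nodes lying above some element of `T`. -/
structure BellissimaModel (n : ℕ) where
  Node : Type
  le : Node → Node → Prop
  le_refl : ∀ a, le a a
  le_trans : ∀ a b c, le a b → le b c → le a c
  le_antisymm : ∀ a b, le a b → le b a → a = b
  level : Node → ℕ
  val : Node → Finset (Fin n)
  val_mono : ∀ a b, le a b → val a ⊆ val b
  level_anti : ∀ a b, le a b → level b ≤ level a
  level_finite : ∀ m : ℕ, {a : Node | level a = m}.Finite
  node0 : Finset (Fin n) → Node
  node0_level : ∀ U, level (node0 U) = 0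
  node0_val : ∀ U, val (node0 U) = U
  node0_inj : Function.Injective node0
  node0_surj : ∀ a, level a = 0 → ∃ U, a = node0 U
  node0_antichain : ∀ U U', le (node0 U) (node0 U') → U = U'
  node : Finset Node → Finset (Fin n) → Node
  node_level : ∀ i T U, BellissimaValid le level val i T U → level (node T U) = i + 1
  node_val : ∀ i T U, BellissimaValid le level val i T U → val (node T U) = U
  node_succ : ∀ i T U, BellissimaValid le level val i T U →
    ∀ b, (le (node T U) b ∧ node T U ≠ b) ↔ ∃ a ∈ T, le a b
  node_inj : ∀ i T U i' T' U', BellissimaValid le level val i T U →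
    BellissimaValid le level val i' T' U' → node T U = node T' U' → T = T' ∧ U = U'
  node_surj : ∀ b i, level b = i + 1 → ∃ T U, BellissimaValid le level val i T U ∧ b = node T U

/-- The level sets `Lev^n_m` of Bellissima's model. -/
def BellissimaModel.Lev {n : ℕ} (M : BellissimaModel n) (m : ℕ) : Set M.Node :=
  {a : M.Node | M.level a = m}

namespace BellissimaModel

variable {n : ℕ} (M : BellissimaModel n)

lemma eq_of_le_of_level_eq {a b : M.Node} (hab : M.le a b) (hl : M.level a = M.level b) :
    a = b := by
  cases hi : M.level a with
  | zero =>
    obtain ⟨U, rfl⟩ := M.node0_surj a hi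
    obtain ⟨V, rfl⟩ := M.node0_surj b (hl ▸ hi)
    rw [M.node0_antichain U V hab]
  | succ i =>
    obtain ⟨T, U, hv, rfl⟩ := M.node_surj a i hi
    by_contra hne
    obtain ⟨c, hc, hcb⟩ := (M.node_succ i T U hv b).1 ⟨hab, hne⟩
    have h1 := M.level_anti c b hcb
    have h2 := hv.1 c hc
    omega

lemma finite_Lev (m : ℕ) : (M.Lev m).Finite := M.level_finite m

lemma valid_pair {m : ℕ} {T : Finset M.Node} (hT : ∀ a ∈ T, M.level a = m)
    (hc : T.card = 2) : BellissimaValid M.le M.level M.val m T ∅ := by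
  refine ⟨fun a ha => (hT a ha).le, ?_, ?_, fun _ _ => Finset.empty_subset _, ?_⟩
  · obtain ⟨a, ha⟩ := Finset.card_pos.1 (by omega : 0 < T.card)
    exact ⟨a, ha, hT a ha⟩
  · intro a ha b hb hab
    exact M.eq_of_le_of_level_eq hab ((hT a ha).trans (hT b hb).symm)
  · rintro β rfl
    simp at hc

lemma choose_two_le_ncard_Lev_succ (m : ℕ) :
    ((M.Lev m).ncard).choose 2 ≤ (M.Lev (m + 1)).ncard := by
  have hv : ∀ T ∈ (M.finite_Lev m).toFinset.powersetCard 2,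
      BellissimaValid M.le M.level M.val m T ∅ := by
    intro T hT
    rw [Finset.mem_powersetCard] at hT
    exact M.valid_pair (fun a ha => (M.finite_Lev m).mem_toFinset.1 (hT.1 ha)) hT.2
  rw [Set.ncard_eq_toFinset_card _ (M.finite_Lev m),
    Set.ncard_eq_toFinset_card _ (M.finite_Lev (m + 1)), ← Finset.card_powersetCard]
  refine Finset.card_le_card_of_injOn (fun T => M.node T ∅) ?_ ?_
  · intro T hT
    exact (M.finite_Lev (m + 1)).mem_toFinset.2 (M.node_level m T ∅ (hv T hT))
  · intro T hT T' hT' h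
    exact (M.node_inj m T ∅ m T' ∅ (hv T hT) (hv T' hT') h).1

lemma four_le_ncard_Lev_zero (hn : 2 ≤ n) : 4 ≤ (M.Lev 0).ncard := by
  have hr : Set.range M.node0 ⊆ M.Lev 0 := by
    rintro _ ⟨U, rfl⟩
    exact M.node0_level U
  have h := Set.ncard_le_ncard hr (M.finite_Lev 0)
  rw [Set.ncard_range_of_injective M.node0_inj, Nat.card_eq_fintype_card, Fintype.card_finset,
    Fintype.card_fin] at h
  exact (Nat.pow_le_pow_right (by norm_num) hn : 2 ^ 2 ≤ 2 ^ n).trans h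

end BellissimaModel

lemma lt_choose_two_of_four_le {L : ℕ} (hL : 4 ≤ L) : L < L.choose 2 := by
  induction L, hL using Nat.le_induction with
  | base => decide
  | succ k hk ih =>
    have h : (k + 1).choose 2 = k + k.choose 2 := by
      rw [Nat.choose_succ_succ' k 1, Nat.choose_one_right]
    omega

/-- For `n ≥ 2`, consecutive levels of Bellissima's model `K_n` strictly grow in size:
`|Lev^n_m| < |Lev^n_{m+1}|`; in particular `K_n` has finite levels of arbitrarily large
cardinality. -/
theorem bellissima_levels_grow (n : ℕ) (hn : 2 ≤ n) (M : BellissimaModel n) :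
    (∀ m : ℕ, (M.Lev m).ncard < (M.Lev (m + 1)).ncard) ∧
    ∀ k : ℕ, ∃ m : ℕ, k ≤ (M.Lev m).ncard := by
  have hstep : ∀ m, 4 ≤ (M.Lev m).ncard → (M.Lev m).ncard < (M.Lev (m + 1)).ncard :=
    fun m h => (lt_choose_two_of_four_le h).trans_le (M.choose_two_le_ncard_Lev_succ m)
  have hfour : ∀ m, 4 ≤ (M.Lev m).ncard := by
    intro m
    induction m with
    | zero => exact M.four_le_ncard_Lev_zero hn
    | succ m ih => exact ih.trans (hstep m ih).le
  have hlt : ∀ m, (M.Lev m).ncard < (M.Lev (m + 1)).ncard := fun m => hstep m (hfour m)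
  exact ⟨hlt, fun k => ⟨k, (strictMono_nat_of_lt_succ hlt).le_apply⟩⟩
end
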